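/- For every a ∈ ℝ there exists a bounded linear operator Q : L²(ℝⁿ, e^{-|x|²}) → L²(ℝⁿ, e^{-|x|²}) such that for every f, Q f is a weak solution of Δ(Qf) + a(Qf) = f, and the operator norm satisfies ‖Q‖ ≤ 1/√(8n). -/

import Mathlib

open MeasureTheory Real

noncomputable def lap {n : ℕ} (f : EuclideanSpace ℝ (Fin n) → ℝ)
    (x : EuclideanSpace ℝ (Fin n)) : ℝ :=
  ∑ i : Fin n, fderiv ℝ (fun y => fderiv ℝ f y (EuclideanSpace.single i 1)) x
    (EuclideanSpace.single i 1)

/-- The Gaussian-weighted measure `e^{-|x|²} dx` on `ℝⁿ`. -/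
noncomputable def gaussMeasure (n : ℕ) : Measure (EuclideanSpace ℝ (Fin n)) :=
  volume.withDensity fun x => ENNReal.ofReal (Real.exp (-‖x‖ ^ 2))

theorem exists_right_inverse_of_bound {V H : Type*} [AddCommGroup V] [Module ℝ V]
    [NormedAddCommGroup H] [InnerProductSpace ℝ H] [CompleteSpace H]
    (j T : V →ₗ[ℝ] H) (C : ℝ) (hC : 0 ≤ C) (hb : ∀ v, ‖j v‖ ≤ C * ‖T v‖) :
    ∃ Q : H →L[ℝ] H, ‖Q‖ ≤ C ∧ ∀ f v, inner ℝ (Q f) (T v) = inner ℝ f (j v) := by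
  let K : Submodule ℝ H := (LinearMap.range T).topologicalClosure
  have hTK : ∀ v, T v ∈ K := fun v =>
    (LinearMap.range T).le_topologicalClosure (LinearMap.mem_range_self T v)
  let e : V →ₗ[ℝ] K := T.codRestrict K hTK
  haveI : CompleteSpace K :=
    (LinearMap.range T).isClosed_topologicalClosure.completeSpace_coe
  have hd : DenseRange e := by
    intro y
    rw [closure_subtype]
    have h1 : ((↑) '' Set.range e : Set H) = (LinearMap.range T : Set H) := by
      ext z
      constructor
      · rintro ⟨_, ⟨v, rfl⟩, rfl⟩
        exact ⟨v, rfl⟩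
      · rintro ⟨v, rfl⟩
        exact ⟨e v, ⟨v, rfl⟩, rfl⟩
    rw [h1]
    exact y.2
  have hb' : ∀ v, ‖j v‖ ≤ C * ‖e v‖ := hb
  let S : H →L[ℝ] H := (j.extendOfNorm e).comp K.orthogonalProjectionOnto
  have hS : ‖S‖ ≤ C := by
    refine (ContinuousLinearMap.opNorm_comp_le _ _).trans ?_
    have h1 := LinearMap.opNorm_extendOfNorm_le hd hC hb'
    have h2 := K.orthogonalProjectionOnto_norm_le
    calc _ ≤ C * 1 := mul_le_mul h1 h2 (ContinuousLinearMap.opNorm_nonneg _) hC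
      _ = C := mul_one C
  have hST : ∀ v, S (T v) = j v := by
    intro v
    have h1 : K.orthogonalProjectionOnto (T v) = e v :=
      Submodule.orthogonalProjectionOnto_mem_subspace_eq_self (e v)
    change (j.extendOfNorm e) (K.orthogonalProjectionOnto (T v)) = j v
    rw [h1]
    exact LinearMap.extendOfNorm_eq hd ⟨C, hb'⟩ v
  refine ⟨ContinuousLinearMap.adjoint S, ?_, fun f v => ?_⟩
  · rw [LinearIsometryEquiv.norm_map]; exact hS
  · rw [ContinuousLinearMap.adjoint_inner_left, hST]

/-- The partial derivative in the direction of the i-th coordinate. -/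
noncomputable def pd {n : ℕ} (i : Fin n) (f : EuclideanSpace ℝ (Fin n) → ℝ)
    (x : EuclideanSpace ℝ (Fin n)) : ℝ :=
  fderiv ℝ f x (EuclideanSpace.single i 1)

/-- `f` is differentiable at `x` with i-th partial derivative `c`. -/
def HP {n : ℕ} (i : Fin n) (f : EuclideanSpace ℝ (Fin n) → ℝ) (c : ℝ)
    (x : EuclideanSpace ℝ (Fin n)) : Prop :=
  DifferentiableAt ℝ f x ∧ pd i f x = c

section HPcalc

variable {n : ℕ} {i : Fin n} {f g : EuclideanSpace ℝ (Fin n) → ℝ} {c d : ℝ}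
  {x : EuclideanSpace ℝ (Fin n)}

theorem HP.mul (hf : HP i f c x) (hg : HP i g d x) :
    HP i (fun y => f y * g y) (c * g x + f x * d) x := by
  refine ⟨hf.1.mul hg.1, ?_⟩
  rw [← hf.2, ← hg.2]
  unfold pd
  rw [fderiv_fun_mul hf.1 hg.1]
  simp
  ring

theorem HP.add (hf : HP i f c x) (hg : HP i g d x) :
    HP i (fun y => f y + g y) (c + d) x := by
  refine ⟨hf.1.add hg.1, ?_⟩
  rw [← hf.2, ← hg.2]
  unfold pd
  rw [fderiv_fun_add hf.1 hg.1]
  simp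

theorem HP.sub (hf : HP i f c x) (hg : HP i g d x) :
    HP i (fun y => f y - g y) (c - d) x := by
  refine ⟨hf.1.sub hg.1, ?_⟩
  rw [← hf.2, ← hg.2]
  unfold pd
  rw [fderiv_fun_sub hf.1 hg.1]
  simp

theorem HP.const (k : ℝ) : HP i (fun _ => k) 0 x := by
  refine ⟨differentiableAt_const k, ?_⟩
  unfold pd
  simp

theorem HP.sum {F : Fin n → EuclideanSpace ℝ (Fin n) → ℝ} {C : Fin n → ℝ}
    (h : ∀ j, HP i (F j) (C j) x) : HP i (fun y => ∑ j, F j y) (∑ j, C j) x := by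
  refine ⟨DifferentiableAt.fun_sum fun j _ => (h j).1, ?_⟩
  simp only [← (h _).2]
  unfold pd
  rw [fderiv_fun_sum fun j _ => (h j).1]
  simp

theorem HP.coord (j : Fin n) : HP i (fun y => y j) (if j = i then 1 else 0) x := by
  have h : HasFDerivAt (fun y : EuclideanSpace ℝ (Fin n) => y j)
      (EuclideanSpace.proj j : EuclideanSpace ℝ (Fin n) →L[ℝ] ℝ) x :=
    (EuclideanSpace.proj j : EuclideanSpace ℝ (Fin n) →L[ℝ] ℝ).hasFDerivAt
  refine ⟨h.differentiableAt, ?_⟩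
  unfold pd
  rw [h.fderiv]
  simp [Pi.single_apply]

theorem HP.exp (hf : HP i f c x) : HP i (fun y => Real.exp (f y)) (Real.exp (f x) * c) x := by
  refine ⟨hf.1.exp, ?_⟩
  rw [← hf.2]
  unfold pd
  rw [fderiv_exp hf.1]
  simp

theorem HP.of_contDiff (hf : ContDiff ℝ (⊤ : ℕ∞) f) : HP i f (pd i f x) x :=
  ⟨(hf.differentiable (by simp)) x, rfl⟩

theorem HP.congr_val (hf : HP i f c x) (h : c = d) : HP i f d x := h ▸ hf

theorem contDiff_pd (hf : ContDiff ℝ (⊤ : ℕ∞) f) : ContDiff ℝ (⊤ : ℕ∞) (pd i f) := by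
  unfold pd
  exact (hf.fderiv_right (m := (⊤ : ℕ∞)) (by simp)).clm_apply contDiff_const

theorem hasCompactSupport_pd (hf : HasCompactSupport f) : HasCompactSupport (pd i f) := by
  unfold pd
  exact hf.fderiv_apply ℝ _

theorem pd_comm (hf : ContDiff ℝ (⊤ : ℕ∞) f) (i j : Fin n) (x : EuclideanSpace ℝ (Fin n)) :
    pd i (pd j f) x = pd j (pd i f) x := by
  have hd : DifferentiableAt ℝ (fderiv ℝ f) x :=
    (hf.fderiv_right (m := (⊤ : ℕ∞)) (by simp)).differentiable (by simp) x
  have key : ∀ i j : Fin n, pd i (pd j f) x =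
      fderiv ℝ (fderiv ℝ f) x (EuclideanSpace.single i 1) (EuclideanSpace.single j 1) := by
    intro i j
    unfold pd
    rw [fderiv_clm_apply hd (differentiableAt_const _)]
    simp
  rw [key, key]
  exact (hf.contDiffAt.isSymmSndFDerivAt (by simp; exact WithTop.coe_le_coe.mpr le_top)).eq _ _

theorem integral_pd (hf : ContDiff ℝ (⊤ : ℕ∞) f) (hc : HasCompactSupport f) :
    ∫ x, pd i f x = 0 := by
  have hi : Integrable (pd i f) (volume : Measure (EuclideanSpace ℝ (Fin n))) :=
    (contDiff_pd hf).continuous.integrable_of_hasCompactSupport (hasCompactSupport_pd hc)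
  have := integral_mul_fderiv_eq_neg_fderiv_mul_of_integrable (𝕜 := ℝ)
    (μ := (volume : Measure (EuclideanSpace ℝ (Fin n))))
    (f := fun _ => (1 : ℝ)) (g := f) (v := EuclideanSpace.single i 1)
    (by simp) (by simpa using! hi)
    (by simpa using! hf.continuous.integrable_of_hasCompactSupport hc)
    (fun x _ => differentiableAt_const _) (fun x _ => (hf.differentiable (by simp)) x)
  simpa [pd] using! this

end HPcalc

/-- The vector field whose divergence appears in the commutator identity. -/
noncomputable def W {n : ℕ} (a : ℝ) (h : EuclideanSpace ℝ (Fin n) → ℝ) (i : Fin n)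
    (x : EuclideanSpace ℝ (Fin n)) : ℝ :=
  (-4) * (pd i h x * (2 * (∑ j, x j * pd j h x) + n * h x) - x i * ∑ j, pd j h x * pd j h x)
    + (-4) * ((∑ j, x j * x j) * (x i * (h x * h x)))
    + (-(4 * a + 8)) * (x i * (h x * h x))

theorem contDiff_coord {n : ℕ} (j : Fin n) :
    ContDiff ℝ (⊤ : ℕ∞) (fun y : EuclideanSpace ℝ (Fin n) => y j) :=
  (EuclideanSpace.proj j : EuclideanSpace ℝ (Fin n) →L[ℝ] ℝ).contDiff

theorem contDiff_W {n : ℕ} (a : ℝ) {h : EuclideanSpace ℝ (Fin n) → ℝ}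
    (hh : ContDiff ℝ (⊤ : ℕ∞) h) (i : Fin n) : ContDiff ℝ (⊤ : ℕ∞) (W a h i) := by
  have hp : ∀ j, ContDiff ℝ (⊤ : ℕ∞) (pd j h) := fun j => contDiff_pd hh
  have hx := fun j : Fin n => contDiff_coord j
  unfold W
  fun_prop

theorem hasCompactSupport_W {n : ℕ} (a : ℝ) {h : EuclideanSpace ℝ (Fin n) → ℝ}
    (hc : HasCompactSupport h) (i : Fin n) : HasCompactSupport (W a h i) := by
  refine hc.mono' ?_
  intro x hx
  by_contra hn
  apply hx
  have h0 : h x = 0 := image_eq_zero_of_notMem_tsupport hn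
  have h1 : ∀ j, pd j h x = 0 := by
    intro j
    have : x ∉ tsupport (fderiv ℝ h) := fun hh => hn (tsupport_fderiv_subset ℝ hh)
    unfold pd
    rw [image_eq_zero_of_notMem_tsupport this]
    simp
  simp [W, h0, h1]

theorem commutator_identity {n : ℕ} (a : ℝ) {h : EuclideanSpace ℝ (Fin n) → ℝ}
    (hh : ContDiff ℝ (⊤ : ℕ∞) h) (x : EuclideanSpace ℝ (Fin n)) :
    ((∑ i, (pd i (pd i h) x - 2 * (x i * pd i h x) - h x + x i * x i * h x)) + a * h x) ^ 2
      - 8 * n * h x ^ 2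
    = ((∑ i, (pd i (pd i h) x + 2 * (x i * pd i h x) + h x + x i * x i * h x)) + a * h x) ^ 2
      + 8 * (∑ i, (pd i h x + x i * h x) ^ 2) + ∑ i, pd i (W a h i) x := by
  have hp : ∀ j, ContDiff ℝ (⊤ : ℕ∞) (pd j h) := fun j => contDiff_pd hh
  set p : Fin n → ℝ := fun i => pd i h x with hpdef
  set H : Fin n → Fin n → ℝ := fun i j => pd i (pd j h) x with hHdef
  have hsymm : ∀ i j, H i j = H j i := fun i j => pd_comm hh i j x
  set r : ℝ := ∑ j, x j * x j with hr
  set q : ℝ := ∑ j, x j * p j with hq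
  set P : ℝ := ∑ j, p j * p j with hP
  set L : ℝ := ∑ j, H j j with hL
  set M : ℝ := ∑ i, p i * ∑ j, x j * H i j with hM
  have hM' : ∑ i, x i * ∑ j, p j * H i j = M := by
    rw [hM]
    simp only [Finset.mul_sum]
    rw [Finset.sum_comm]
    refine Finset.sum_congr rfl fun i _ => Finset.sum_congr rfl fun j _ => ?_
    rw [hsymm]; ring
  have hW : ∀ i, pd i (W a h i) x =
      (-4) * (H i i * (2 * q + n * h x) + p i * (2 * (p i + ∑ j, x j * H i j) + n * p i)
        - (P + x i * (2 * ∑ j, p j * H i j)))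
      + (-4) * ((2 * x i) * (x i * (h x * h x)) + r * (h x * h x + 2 * (x i * p i) * h x))
      + (-(4 * a + 8)) * (h x * h x + 2 * (x i * p i) * h x) := by
    intro i
    have hi := HP.of_contDiff (i := i) (x := x) hh
    have hpi := fun j => HP.of_contDiff (i := i) (x := x) (hp j)
    have hq' : HP i (fun y => ∑ j, y j * pd j h y) (p i + ∑ j, x j * H i j) x := by
      refine (HP.sum fun j => (HP.coord j).mul (hpi j)).congr_val ?_
      simp [Finset.sum_add_distrib, hpdef, hHdef]
    have hP' : HP i (fun y => ∑ j, pd j h y * pd j h y) (2 * ∑ j, p j * H i j) x := by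
      refine (HP.sum fun j => (hpi j).mul (hpi j)).congr_val ?_
      rw [Finset.mul_sum]
      refine Finset.sum_congr rfl fun j _ => ?_
      simp only [hpdef, hHdef]; ring
    have hr' : HP i (fun y => ∑ j, y j * y j) (2 * x i) x := by
      refine (HP.sum fun j => (HP.coord j).mul (HP.coord j)).congr_val ?_
      simp [Finset.sum_add_distrib]; ring
    have hxi : HP i (fun y => y i) 1 x := (HP.coord i).congr_val (by simp)
    have hxh := hxi.mul (hi.mul hi)
    have := (((HP.const (-4)).mul (((hpi i).mul
      (((HP.const 2).mul hq').add ((HP.const (n : ℝ)).mul hi))).sub (hxi.mul hP'))).add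
      ((HP.const (-4)).mul (hr'.mul hxh))).add ((HP.const (-(4 * a + 8))).mul hxh)
    refine (Eq.trans ?_ this.2).trans ?_
    · rfl
    · simp only [hpdef, hHdef, hr, hq, hP]; ring
  have e1 : ∑ i, pd i (W a h i) x =
      (-4) * (L * (2 * q + n * h x) + 2 * P + 2 * M + n * P - n * P - 2 * M)
      + (-4) * (2 * r * h x ^ 2 + n * r * h x ^ 2 + 2 * r * h x * q)
      - (4 * a + 8) * (n * h x ^ 2 + 2 * h x * q) := by
    simp only [hW]
    rw [Finset.sum_add_distrib, Finset.sum_add_distrib, ← Finset.mul_sum, ← Finset.mul_sum,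
      ← Finset.mul_sum, Finset.sum_sub_distrib, Finset.sum_add_distrib, Finset.sum_add_distrib,
      Finset.sum_add_distrib, Finset.sum_add_distrib]
    have s1 : ∑ i, H i i * (2 * q + n * h x) = L * (2 * q + n * h x) := by
      rw [hL, Finset.sum_mul]
    have s2 : ∑ i, p i * (2 * (p i + ∑ j, x j * H i j) + n * p i) = 2 * P + 2 * M + n * P := by
      rw [hP, hM, Finset.mul_sum, Finset.mul_sum, Finset.mul_sum, ← Finset.sum_add_distrib,
        ← Finset.sum_add_distrib]
      exact Finset.sum_congr rfl fun i _ => by ring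
    have s3 : ∑ i, x i * (2 * ∑ j, p j * H i j) = 2 * M := by
      rw [← hM', Finset.mul_sum]
      exact Finset.sum_congr rfl fun i _ => by ring
    have s4 : ∑ i, 2 * x i * (x i * (h x * h x)) = 2 * r * h x ^ 2 := by
      rw [hr, Finset.mul_sum, Finset.sum_mul]
      exact Finset.sum_congr rfl fun i _ => by ring
    have s5 : ∑ i, 2 * (x i * p i) * h x = 2 * h x * q := by
      rw [hq, Finset.mul_sum]
      exact Finset.sum_congr rfl fun i _ => by ring
    have s6 : ∑ i, r * (h x * h x + 2 * (x i * p i) * h x)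
        = r * (n * (h x * h x) + 2 * h x * q) := by
      rw [← Finset.mul_sum, Finset.sum_add_distrib, s5]; simp
    rw [s1, s2, s3, s4, s5, s6]
    simp
    ring
  have e2 : ∑ i, (pd i (pd i h) x - 2 * (x i * pd i h x) - h x + x i * x i * h x)
      = L - 2 * q - n * h x + r * h x := by
    rw [Finset.sum_add_distrib, Finset.sum_sub_distrib, Finset.sum_sub_distrib,
      ← Finset.mul_sum, ← Finset.sum_mul]
    simp [hL, hq, hr, hpdef, hHdef]
  have e3 : ∑ i, (pd i (pd i h) x + 2 * (x i * pd i h x) + h x + x i * x i * h x)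
      = L + 2 * q + n * h x + r * h x := by
    rw [Finset.sum_add_distrib, Finset.sum_add_distrib, Finset.sum_add_distrib,
      ← Finset.mul_sum, ← Finset.sum_mul]
    simp [hL, hq, hr, hpdef, hHdef]
  have e4 : ∑ i, (pd i h x + x i * h x) ^ 2 = P + 2 * h x * q + r * h x ^ 2 := by
    rw [hP, hq, hr, Finset.mul_sum, Finset.sum_mul, ← Finset.sum_add_distrib,
      ← Finset.sum_add_distrib]
    exact Finset.sum_congr rfl fun i _ => by simp only [hpdef]; ring
  rw [e1, e2, e3, e4]
  ring

theorem norm_sq_eq_sum {n : ℕ} (x : EuclideanSpace ℝ (Fin n)) : ‖x‖ ^ 2 = ∑ j, x j * x j := by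
  rw [EuclideanSpace.real_norm_sq_eq]
  exact Finset.sum_congr rfl fun i _ => by ring

theorem lap_conj {n : ℕ} {h ψ : EuclideanSpace ℝ (Fin n) → ℝ} (hh : ContDiff ℝ (⊤ : ℕ∞) h)
    (hψ : ψ = fun x => Real.exp ((-(1 / 2)) * ∑ j, x j * x j) * h x)
    (x : EuclideanSpace ℝ (Fin n)) :
    lap ψ x = Real.exp ((-(1 / 2)) * ∑ j, x j * x j) *
      ∑ i, (pd i (pd i h) x - 2 * (x i * pd i h x) - h x + x i * x i * h x) := by
  have hE : ∀ i x, HP i (fun y : EuclideanSpace ℝ (Fin n) =>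
      Real.exp ((-(1 / 2)) * ∑ j, y j * y j))
      (Real.exp ((-(1 / 2)) * ∑ j, x j * x j) * (- x i)) x := by
    intro i x
    have hr' : HP i (fun y : EuclideanSpace ℝ (Fin n) => ∑ j, y j * y j) (2 * x i) x := by
      refine (HP.sum fun j => (HP.coord j).mul (HP.coord j)).congr_val ?_
      simp [Finset.sum_add_distrib]; ring
    exact ((HP.const (-(1 / 2))).mul hr').exp.congr_val (by ring)
  have h1 : ∀ i, pd i ψ = fun x => Real.exp ((-(1 / 2)) * ∑ j, x j * x j) *
      (pd i h x - x i * h x) := by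
    intro i
    funext x
    rw [hψ, ((hE i x).mul (HP.of_contDiff hh)).2]
    ring
  have h2 : lap ψ x = ∑ i, pd i (pd i ψ) x := rfl
  rw [h2, Finset.mul_sum]
  refine Finset.sum_congr rfl fun i _ => ?_
  have hxi : HP i (fun y => y i) 1 x := (HP.coord i).congr_val (by simp)
  rw [h1, ((hE i x).mul ((HP.of_contDiff (contDiff_pd hh)).sub
    (hxi.mul (HP.of_contDiff hh)))).2]
  ring

theorem weighted_bound {n : ℕ} (a : ℝ) {ψ : EuclideanSpace ℝ (Fin n) → ℝ}
    (hψ : ContDiff ℝ (⊤ : ℕ∞) ψ) (hc : HasCompactSupport ψ) :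
    8 * n * ∫ x, Real.exp (‖x‖ ^ 2) * ψ x ^ 2 ≤
      ∫ x, Real.exp (‖x‖ ^ 2) * (lap ψ x + a * ψ x) ^ 2 := by
  have hx := fun j : Fin n => contDiff_coord j
  set h : EuclideanSpace ℝ (Fin n) → ℝ := fun x => Real.exp ((1 / 2) * ∑ j, x j * x j) * ψ x
    with hdef
  have hh : ContDiff ℝ (⊤ : ℕ∞) h := by
    rw [hdef]; fun_prop
  have hhc : HasCompactSupport h := hc.mul_left
  have hψh : ψ = fun x => Real.exp ((-(1 / 2)) * ∑ j, x j * x j) * h x := by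
    funext x
    simp only [hdef]
    rw [← mul_assoc, ← Real.exp_add]
    ring_nf
    simp
  have hexp : ∀ x : EuclideanSpace ℝ (Fin n), Real.exp (‖x‖ ^ 2) *
      Real.exp ((-(1 / 2)) * ∑ j, x j * x j) ^ 2 = 1 := by
    intro x
    rw [norm_sq_eq_sum, ← Real.exp_nat_mul, ← Real.exp_add]
    push_cast
    ring_nf
    simp
  set A : EuclideanSpace ℝ (Fin n) → ℝ := fun x =>
    (∑ i, (pd i (pd i h) x - 2 * (x i * pd i h x) - h x + x i * x i * h x)) + a * h x with hA
  have i1 : ∀ x, Real.exp (‖x‖ ^ 2) * ψ x ^ 2 = h x ^ 2 := by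
    intro x
    rw [congrFun hψh x]
    linear_combination (h x ^ 2) * hexp x
  have i2 : ∀ x, Real.exp (‖x‖ ^ 2) * (lap ψ x + a * ψ x) ^ 2 = A x ^ 2 := by
    intro x
    rw [lap_conj hh hψh x, congrFun hψh x]
    simp only [hA]
    linear_combination (A x ^ 2) * hexp x
  simp only [i1, i2]
  have hWint : ∀ i, Integrable (fun x => pd i (W a h i) x)
      (volume : Measure (EuclideanSpace ℝ (Fin n))) := fun i =>
    (contDiff_pd (contDiff_W a hh i)).continuous.integrable_of_hasCompactSupport
      (hasCompactSupport_pd (hasCompactSupport_W a hhc i))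
  have hh2 : Integrable (fun x => h x ^ 2) (volume : Measure (EuclideanSpace ℝ (Fin n))) := by
    refine (hh.continuous.pow 2).integrable_of_hasCompactSupport ?_
    refine hhc.mono fun x hx hx0 => hx ?_
    simp [hx0]
  have hp : ∀ j, ContDiff ℝ (⊤ : ℕ∞) (pd j h) := fun j => contDiff_pd hh
  have hAc : Continuous A := by
    have h2 : ∀ i, Continuous (pd i (pd i h)) := fun i => (contDiff_pd (hp i)).continuous
    have h1 : ∀ i, Continuous (pd i h) := fun i => (hp i).continuous
    have h0 := hh.continuous
    rw [hA]
    fun_prop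
  have hAs : HasCompactSupport A := by
    refine hhc.mono' fun x hx => ?_
    by_contra hn
    apply hx
    have h0 : h x = 0 := image_eq_zero_of_notMem_tsupport hn
    have hsub : ∀ (j : Fin n) (f : EuclideanSpace ℝ (Fin n) → ℝ),
        tsupport (pd j f) ⊆ tsupport f := by
      intro j f
      refine closure_minimal (fun y hy => ?_) (isClosed_tsupport f)
      by_contra hyn
      have : y ∉ tsupport (fderiv ℝ f) := fun hh => hyn (tsupport_fderiv_subset ℝ hh)
      apply hy
      unfold pd
      rw [image_eq_zero_of_notMem_tsupport this]
      simp
    have h1 : ∀ j, pd j h x = 0 := fun j =>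
      image_eq_zero_of_notMem_tsupport fun hh => hn (hsub j h hh)
    have h2 : ∀ j, pd j (pd j h) x = 0 := fun j =>
      image_eq_zero_of_notMem_tsupport fun hh => hn (hsub j h (hsub j _ hh))
    simp [hA, h0, h1, h2]
  have hA2 : Integrable (fun x => A x ^ 2) (volume : Measure (EuclideanSpace ℝ (Fin n))) := by
    refine (hAc.pow 2).integrable_of_hasCompactSupport ?_
    refine hAs.mono fun x hx hx0 => hx ?_
    simp [hx0]
  have hz : ∫ x, ∑ i, pd i (W a h i) x = 0 := by
    rw [integral_finset_sum _ fun i _ => hWint i]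
    exact Finset.sum_eq_zero fun i _ => integral_pd (contDiff_W a hh i) (hasCompactSupport_W a hhc i)
  rw [← integral_const_mul]
  have hsum : Integrable (fun x => ∑ i, pd i (W a h i) x)
      (volume : Measure (EuclideanSpace ℝ (Fin n))) := integrable_finset_sum _ fun i _ => hWint i
  have hmono : ∫ x, (8 * n * h x ^ 2 + ∑ i, pd i (W a h i) x) ≤ ∫ x, A x ^ 2 := by
    refine integral_mono ((hh2.const_mul _).add hsum) hA2 fun x => ?_
    have hid := commutator_identity a hh x
    have hpos : 0 ≤ 8 * ∑ i, (pd i h x + x i * h x) ^ 2 :=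
      mul_nonneg (by norm_num) (Finset.sum_nonneg fun i _ => sq_nonneg _)
    have hsq := sq_nonneg
      ((∑ i, (pd i (pd i h) x + 2 * (x i * pd i h x) + h x + x i * x i * h x)) + a * h x)
    simp only [hA]
    linarith
  rw [integral_add (hh2.const_mul _) hsum, hz, add_zero] at hmono
  exact hmono

instance instLocFinGauss (n : ℕ) : IsLocallyFiniteMeasure (gaussMeasure n) := by
  unfold gaussMeasure
  exact IsLocallyFiniteMeasure.withDensity_ofReal (by fun_prop)

theorem integral_gauss {n : ℕ} (g : EuclideanSpace ℝ (Fin n) → ℝ) :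
    ∫ x, g x ∂(gaussMeasure n) = ∫ x, Real.exp (-‖x‖ ^ 2) * g x := by
  unfold gaussMeasure
  rw [integral_withDensity_eq_integral_toReal_smul (by fun_prop) (by simp)]
  simp [ENNReal.toReal_ofReal (Real.exp_pos _).le]

theorem ae_gauss {n : ℕ} : (volume : Measure (EuclideanSpace ℝ (Fin n))) ≪ gaussMeasure n := by
  unfold gaussMeasure
  refine withDensity_absolutelyContinuous' (by fun_prop) ?_
  exact Filter.Eventually.of_forall fun x => by simp [Real.exp_pos]

/-- Test functions as a submodule. -/
def testFun (n : ℕ) : Submodule ℝ (EuclideanSpace ℝ (Fin n) → ℝ) where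
  carrier := {ψ | ContDiff ℝ (⊤ : ℕ∞) ψ ∧ HasCompactSupport ψ}
  zero_mem' := ⟨contDiff_const, HasCompactSupport.zero⟩
  add_mem' := fun hf hg => ⟨hf.1.add hg.1, hf.2.add hg.2⟩
  smul_mem' := fun c f hf => ⟨contDiff_const.smul hf.1, hf.2.smul_left (f := fun _ => c)⟩

theorem lap_eq {n : ℕ} (f : EuclideanSpace ℝ (Fin n) → ℝ) (x : EuclideanSpace ℝ (Fin n)) :
    lap f x = ∑ i, pd i (pd i f) x := rfl

theorem memLp_weight {n : ℕ} {g : EuclideanSpace ℝ (Fin n) → ℝ} (hg : Continuous g)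
    (hc : HasCompactSupport g) :
    MemLp (fun x => Real.exp (‖x‖ ^ 2) * g x) 2 (gaussMeasure n) := by
  refine Continuous.memLp_of_hasCompactSupport (by fun_prop) ?_
  exact hc.mul_left

theorem continuous_lap {n : ℕ} {f : EuclideanSpace ℝ (Fin n) → ℝ}
    (hf : ContDiff ℝ (⊤ : ℕ∞) f) : Continuous (lap f) := by
  have : lap f = fun x => ∑ i, pd i (pd i f) x := rfl
  rw [this]
  exact continuous_finset_sum _ fun i _ => (contDiff_pd (contDiff_pd hf)).continuous

theorem hasCompactSupport_lap {n : ℕ} {f : EuclideanSpace ℝ (Fin n) → ℝ}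
    (hf : HasCompactSupport f) : HasCompactSupport (lap f) := by
  have h1 : lap f = fun x => ∑ i, pd i (pd i f) x := rfl
  rw [h1]
  have : ∀ s : Finset (Fin n), HasCompactSupport (fun x => ∑ i ∈ s, pd i (pd i f) x) := by
    intro s
    classical
    induction s using Finset.induction_on with
    | empty => simpa using! HasCompactSupport.zero
    | insert i s hi ih =>
      simp only [Finset.sum_insert hi]
      exact (hasCompactSupport_pd (hasCompactSupport_pd hf)).add ih
  exact this _

theorem lap_add' {n : ℕ} {f g : EuclideanSpace ℝ (Fin n) → ℝ} (hf : ContDiff ℝ (⊤ : ℕ∞) f)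
    (hg : ContDiff ℝ (⊤ : ℕ∞) g) (x : EuclideanSpace ℝ (Fin n)) :
    lap (f + g) x = lap f x + lap g x := by
  simp only [lap_eq, ← Finset.sum_add_distrib]
  refine Finset.sum_congr rfl fun i _ => ?_
  have h1 : pd i (f + g) = fun y => pd i f y + pd i g y := by
    funext y
    exact ((HP.of_contDiff hf).add (HP.of_contDiff hg)).2
  rw [h1]
  exact ((HP.of_contDiff (contDiff_pd hf)).add (HP.of_contDiff (contDiff_pd hg))).2

theorem lap_smul' {n : ℕ} {f : EuclideanSpace ℝ (Fin n) → ℝ} (hf : ContDiff ℝ (⊤ : ℕ∞) f)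
    (c : ℝ) (x : EuclideanSpace ℝ (Fin n)) :
    lap (c • f) x = c * lap f x := by
  simp only [lap_eq, Finset.mul_sum]
  refine Finset.sum_congr rfl fun i _ => ?_
  have h1 : pd i (c • f) = fun y => c * pd i f y := by
    funext y
    exact (((HP.const c).mul (HP.of_contDiff hf)).congr_val (by ring)).2
  rw [h1]
  exact (((HP.const c).mul (HP.of_contDiff (contDiff_pd hf))).congr_val (by ring)).2

theorem memLp_lap {n : ℕ} (a : ℝ) (ψ : testFun n) :
    MemLp (fun x => Real.exp (‖x‖ ^ 2) * (lap ψ.1 x + a * ψ.1 x)) 2 (gaussMeasure n) := by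
  refine memLp_weight ?_ ?_
  · exact (continuous_lap ψ.2.1).add (continuous_const.mul ψ.2.1.continuous)
  · exact (hasCompactSupport_lap ψ.2.2).add (ψ.2.2.mul_left (f := fun _ => a))

/-- The embedding of test functions, with weight. -/
noncomputable def embL (n : ℕ) : testFun n →ₗ[ℝ] Lp ℝ 2 (gaussMeasure n) where
  toFun ψ := (memLp_weight ψ.2.1.continuous ψ.2.2).toLp _
  map_add' f g := by
    rw [← MemLp.toLp_add]
    congr 1
    funext x
    simp
    ring
  map_smul' c f := by
    rw [RingHom.id_apply, ← MemLp.toLp_const_smul]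
    congr 1
    funext x
    simp
    ring

/-- The operator `Δ + a` on test functions, with weight. -/
noncomputable def opL (n : ℕ) (a : ℝ) : testFun n →ₗ[ℝ] Lp ℝ 2 (gaussMeasure n) where
  toFun ψ := (memLp_lap a ψ).toLp _
  map_add' f g := by
    rw [← MemLp.toLp_add]
    congr 1
    funext x
    have := lap_add' f.2.1 g.2.1 x
    simp only [Submodule.coe_add, Pi.add_apply, this]
    ring
  map_smul' c f := by
    rw [RingHom.id_apply, ← MemLp.toLp_const_smul]
    congr 1
    funext x
    have := lap_smul' f.2.1 c x
    simp only [Submodule.coe_smul, Pi.smul_apply, this, smul_eq_mul]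
    ring

theorem inner_toLp {n : ℕ} (u : Lp ℝ 2 (gaussMeasure n)) {g : EuclideanSpace ℝ (Fin n) → ℝ}
    (hg : MemLp (fun x => Real.exp (‖x‖ ^ 2) * g x) 2 (gaussMeasure n)) :
    inner ℝ u (hg.toLp _) = ∫ x, (u : EuclideanSpace ℝ (Fin n) → ℝ) x * g x := by
  rw [L2.inner_def, integral_gauss]
  refine integral_congr_ae ?_
  filter_upwards [ae_gauss.ae_le hg.coeFn_toLp] with x hx
  rw [hx]
  have : Real.exp (-‖x‖ ^ 2) * Real.exp (‖x‖ ^ 2) = 1 := by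
    rw [← Real.exp_add]; simp
  simp only [RCLike.inner_apply, conj_trivial]
  linear_combination ((u : EuclideanSpace ℝ (Fin n) → ℝ) x * g x) * this

theorem normSq_toLp {n : ℕ} {g : EuclideanSpace ℝ (Fin n) → ℝ}
    (hg : MemLp (fun x => Real.exp (‖x‖ ^ 2) * g x) 2 (gaussMeasure n)) :
    ‖hg.toLp _‖ ^ 2 = ∫ x, Real.exp (‖x‖ ^ 2) * g x ^ 2 := by
  rw [← real_inner_self_eq_norm_sq, inner_toLp]
  refine integral_congr_ae ?_
  filter_upwards [ae_gauss.ae_le hg.coeFn_toLp] with x hx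
  rw [hx]
  ring

theorem stmt10 (n : ℕ) (hn : 0 < n) (a : ℝ) :
    ∃ Q : Lp ℝ 2 (gaussMeasure n) →L[ℝ] Lp ℝ 2 (gaussMeasure n),
      (∀ f : Lp ℝ 2 (gaussMeasure n),
        ∀ ψ : EuclideanSpace ℝ (Fin n) → ℝ, ContDiff ℝ (⊤ : ℕ∞) ψ → HasCompactSupport ψ →
          ∫ x, (Q f : EuclideanSpace ℝ (Fin n) → ℝ) x * (lap ψ x + a * ψ x) ∂volume =
            ∫ x, (f : EuclideanSpace ℝ (Fin n) → ℝ) x * ψ x ∂volume) ∧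
      ‖Q‖ ≤ 1 / Real.sqrt (8 * n) := by
  obtain ⟨Q, hQ, h⟩ := exists_right_inverse_of_bound (embL n) (opL n a) (1 / Real.sqrt (8 * n))
    (by positivity) (by
      intro ψ
      have hpos : (0 : ℝ) < 8 * n := by positivity
      have hb := weighted_bound a ψ.2.1 ψ.2.2
      have e1 : ‖embL n ψ‖ ^ 2 = ∫ x, Real.exp (‖x‖ ^ 2) * ψ.1 x ^ 2 := 
        normSq_toLp (memLp_weight ψ.2.1.continuous ψ.2.2)
      have e2 : ‖opL n a ψ‖ ^ 2 = ∫ x, Real.exp (‖x‖ ^ 2) * (lap ψ.1 x + a * ψ.1 x) ^ 2 :=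
        normSq_toLp (memLp_lap a ψ)
      rw [← e1, ← e2] at hb
      have hs : 0 < Real.sqrt (8 * n) := Real.sqrt_pos.mpr hpos
      rw [one_div, ← div_eq_inv_mul, le_div_iff₀ hs]
      refine abs_le_of_sq_le_sq' ?_ (norm_nonneg _) |>.2
      rw [mul_pow, Real.sq_sqrt hpos.le]
      linarith)
  refine ⟨Q, fun f ψ h1 h2 => ?_, hQ⟩
  have := h f ⟨ψ, h1, h2⟩
  have e1 : inner ℝ (Q f) (opL n a ⟨ψ, h1, h2⟩) = _ := inner_toLp _ (memLp_lap a ⟨ψ, h1, h2⟩)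
  have e2 : inner ℝ f (embL n ⟨ψ, h1, h2⟩) = _ := inner_toLp _ (memLp_weight h1.continuous h2)
  rw [e1, e2] at this
  exact this
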